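/- Let V be a set of n distinct points in C^d and suppose there is a subset ℬ ⊆ V such that at least δn^2 pairs (b, v) ∈ ℬ × (V \ ℬ) lie on a special line (a line through at least 3 points of V). Then there exists ℬ' ⊆ ℬ with |ℬ'| ≥ (δ/6)n whose affine dimension is at most O(1/δ). -/

import Mathlib

/-!
Lift the `n` points to vectors by homogeneous coordinates and choose a subspace `W` maximising
`#(V ∩ W) - s * dim W`; then `dim W ≤ n / s`, and modulo `W` every subspace `U` contains at most
`s * dim U` of the remaining vectors. This dispersion bounds
`s * log |det A| + ∑ (log ‖xᵢ‖ - log ‖A xᵢ‖)` over linear contractions `A`, and at a near-maximiser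
`A` every direction `y` satisfies `∑ cos² ∠(y, A xᵢ) ≤ 4 * s`, since composing `A` with the map
that halves `y` cannot increase the functional by more than a little.

Three collinear points give three linearly dependent vectors, and dependent vectors correlate:
unless all three lie in `W`, their squared cosines add up to at least `1 / 2`. Averaging over the
third points of each line bounds the number of pairs on special lines that do not lie in `W` by
`24 * s * n`. With `s` a small multiple of `δ * n` most of the given pairs therefore lie in `W`,
which must contain many points of `ℬ`, while `dim W ≤ n / s = O(1 / δ)`.
-/

open Module MeasureTheory

section LevelSets

variable {ι κ : Type*} [Fintype ι] [Fintype κ]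

lemma ofReal_sum_eq_lintegral_ncard {f : ι → ℝ} (hf : 0 ≤ f) :
    ENNReal.ofReal (∑ i, f i) = ∫⁻ t in Set.Ioi (0 : ℝ), ENNReal.ofReal {i | t ≤ f i}.ncard := by
  let : MeasurableSpace ι := ⊤
  have h := lintegral_eq_lintegral_meas_le (μ := Measure.count) (.of_forall hf)
    (measurable_of_finite f).aemeasurable
  simpa only [lintegral_count, tsum_fintype, Measure.count_apply (MeasurableSet.of_discrete),
    ENNReal.ofReal_sum_of_nonneg fun i _ => hf i, ← (Set.toFinite _).cast_ncard_eq,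
    ENat.toENNReal_coe, ENNReal.ofReal_natCast] using h

lemma sum_le_mul_sum_of_ncard_superlevel_le {f : ι → ℝ} {g : κ → ℝ} (hf : 0 ≤ f) (hg : 0 ≤ g)
    {s : ℝ} (hs : 0 ≤ s)
    (h : ∀ t, ({i | t ≤ f i}.ncard : ℝ) ≤ s * ({j | t ≤ g j}.ncard : ℝ)) :
    ∑ i, f i ≤ s * ∑ j, g j := by
  rw [← ENNReal.ofReal_le_ofReal_iff (mul_nonneg hs (Finset.sum_nonneg fun j _ => hg j)),
    ENNReal.ofReal_mul hs, ofReal_sum_eq_lintegral_ncard hf, ofReal_sum_eq_lintegral_ncard hg,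
    ← lintegral_const_mul' _ _ ENNReal.ofReal_ne_top]
  refine lintegral_mono fun t => ?_
  rw [← ENNReal.ofReal_mul hs]
  exact ENNReal.ofReal_le_ofReal (h t)

end LevelSets

section MaximalBasis

variable {K M κ ι : Type*} [Field K] [AddCommGroup M] [Module K M]

-- Take a basis of maximal total weight: exchanging `b j` for `z` must not increase the weight.
lemma exists_basis_forall_repr_ne_zero_imp_le [Finite κ] {R : Type*} [AddCommGroup R]
    [LinearOrder R] [IsOrderedAddMonoid R] {S : Set M} (hS : S.Finite) (e : Basis κ K M)
    (he : ∀ j, e j ∈ S) (l : M → R) :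
    ∃ b : Basis κ K M, (∀ j, b j ∈ S) ∧ ∀ z ∈ S, ∀ j, b.repr z j ≠ 0 → l z ≤ l (b j) := by
  classical
  have := Fintype.ofFinite κ
  have hfin : {b : κ → M | (∀ j, b j ∈ S) ∧ LinearIndependent K b}.Finite :=
    (Set.Finite.pi' fun _ => hS).subset fun b hb => hb.1
  obtain ⟨b, ⟨hbS, hb⟩, hmax⟩ := Set.exists_max_image _ (fun b : κ → M => ∑ j, l (b j)) hfin
    ⟨e, he, e.linearIndependent⟩
  have : Module.Finite K M := .of_basis e
  let B : Basis κ K M := .mk hb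
    (hb.span_eq_top_of_card_eq_finrank' (finrank_eq_card_basis e).symm).ge
  have hB : ⇑B = b := Basis.coe_mk _ _
  refine ⟨B, fun j => hB ▸ hbS j, fun z hz j hzj => ?_⟩
  have exchanged : LinearIndependent K (Function.update b j z) := by
    refine hb.update j z ⟨1, one_mem _, B.repr z, mem_nonZeroDivisors_of_ne_zero hzj, ?_⟩
    rw [one_smul, ← hB, B.linearCombination_repr]
  have hle := hmax (Function.update b j z)
    ⟨fun i => Function.update_apply b j z i ▸ by split_ifs <;> simp_all, exchanged⟩
  rw [← Finset.add_sum_erase _ _ (Finset.mem_univ j), ← Finset.add_sum_erase _ (fun i => l (b i))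
    (Finset.mem_univ j), Function.update_self, Finset.sum_congr rfl fun i hi => by
      rw [Function.update_of_ne (Finset.ne_of_mem_erase hi)]] at hle
  simpa only [hB] using le_of_add_le_add_right hle

/-- A family of vectors is `s`-dispersed if every subspace `U` contains at most `s * dim U` of its
members. This is the condition under which the family can be brought into approximately isotropic
position. -/
def IsDispersed (K : Type*) [Field K] {M : Type*} [AddCommGroup M] [Module K M] {ι : Type*}
    (x : ι → M) (s : ℝ) : Prop :=
  ∀ U : Submodule K M, ((x ⁻¹' U).ncard : ℝ) ≤ s * finrank K U

variable {x : ι → M} {s : ℝ}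

lemma IsDispersed.ne_zero [Finite ι] (hx : IsDispersed K x s) (i : ι) : x i ≠ 0 := by
  intro hi
  have hbot := hx ⊥
  rw [finrank_bot, Nat.cast_zero, mul_zero, Nat.cast_nonpos,
    Set.ncard_eq_zero (Set.toFinite _)] at hbot
  exact Set.eq_empty_iff_forall_notMem.1 hbot i hi

lemma IsDispersed.comp_linearEquiv {N : Type*} [AddCommGroup N] [Module K N]
    (hx : IsDispersed K x s) (φ : M ≃ₗ[K] N) : IsDispersed K (φ ∘ x) s := fun U => by
  have h := hx (U.comap (φ : M →ₗ[K] N))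
  rwa [(φ.ofSubmodule' U).finrank_eq] at h

lemma IsDispersed.sum_le_mul_sum_basis [Fintype ι] [Fintype κ] (hx : IsDispersed K x s) (hs : 0 ≤ s)
    {l : M → ℝ} (hl : 0 ≤ l) (b : Basis κ K M)
    (hb : ∀ i j, b.repr (x i) j ≠ 0 → l (x i) ≤ l (b j)) :
    ∑ i, l (x i) ≤ s * ∑ j, l (b j) := by
  refine sum_le_mul_sum_of_ncard_superlevel_le (fun i => hl (x i)) (fun j => hl (b j)) hs
    fun t => ?_
  let U := Submodule.span K (b '' {j | t ≤ l (b j)})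
  have mem_U : {i | t ≤ l (x i)} ⊆ x ⁻¹' U := fun i hi =>
    b.mem_span_image.2 fun j hj => le_trans hi (hb i j (Finsupp.mem_support_iff.1 hj))
  have finrank_U : finrank K U = {j | t ≤ l (b j)}.ncard := by
    classical
    rw [finrank_span_set_eq_card (b.linearIndependent.linearIndepOn _).id_image,
      ← Set.ncard_eq_toFinset_card', Set.ncard_image_of_injective _ b.injective]
  calc ({i | t ≤ l (x i)}.ncard : ℝ) ≤ (x ⁻¹' U).ncard :=
        Nat.cast_le.2 (Set.ncard_le_ncard mem_U)
    _ ≤ s * finrank K U := hx U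
    _ = s * {j | t ≤ l (b j)}.ncard := by rw [finrank_U]

lemma finrank_comap_mkQ [FiniteDimensional K M] (W : Submodule K M) (U : Submodule K (M ⧸ W)) :
    finrank K (U.comap W.mkQ) = finrank K W + finrank K U := by
  have hW := W.finrank_quotient_add_finrank
  have hU := U.finrank_quotient_add_finrank
  have hcomap := (U.comap W.mkQ).finrank_quotient_add_finrank
  have e := (Submodule.quotientQuotientEquivQuotient W _ (W.le_comap_mkQ U)).finrank_eq
  rw [Submodule.map_comap_eq_of_surjective W.mkQ_surjective] at e
  lia

-- `W` maximises the excess `#{i | x i ∈ W} - s * dim W`; the preimage in `M` of a subspace of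
-- `M ⧸ W` cannot do better.
lemma exists_submodule_isDispersed_mkQ [Fintype ι] [FiniteDimensional K M] (x : ι → M) (s : ℝ) :
    ∃ W : Submodule K M, s * finrank K W ≤ Fintype.card ι ∧
      IsDispersed K (fun i : {i // x i ∉ W} => W.mkQ (x i)) s := by
  obtain ⟨W, hW⟩ : ∃ W : Submodule K M, ∀ W' : Submodule K M,
      ((x ⁻¹' W').ncard : ℝ) - s * finrank K W' ≤ (x ⁻¹' W).ncard - s * finrank K W := by
    let p : Submodule K M → ℕ × ℕ := fun W => ((x ⁻¹' W).ncard, finrank K W)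
    have hp : (Set.range p).Finite := by
      refine ((Set.finite_Iic (Nat.card ι)).prod (Set.finite_Iic (finrank K M))).subset ?_
      rintro _ ⟨W, rfl⟩
      exact ⟨Set.ncard_le_card _, W.finrank_le⟩
    obtain ⟨_, ⟨W, rfl⟩, hW⟩ := Set.exists_max_image _ (fun q => (q.1 : ℝ) - s * q.2) hp
      (Set.range_nonempty p)
    exact ⟨W, fun W' => hW _ ⟨W', rfl⟩⟩
  refine ⟨W, ?_, fun U => ?_⟩
  · have h := hW ⊥
    have card_le : ((x ⁻¹' W).ncard : ℝ) ≤ Fintype.card ι := by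
      rw [← Nat.card_eq_fintype_card]
      exact Nat.cast_le.2 (Set.ncard_le_card _)
    rw [finrank_bot, Nat.cast_zero, mul_zero, sub_zero] at h
    linarith [Nat.cast_nonneg (α := ℝ) (x ⁻¹' (⊥ : Submodule K M)).ncard]
  · have hcard : (x ⁻¹' (U.comap W.mkQ)).ncard =
        (x ⁻¹' W).ncard + ((fun i : {i // x i ∉ W} => W.mkQ (x i)) ⁻¹' U).ncard := by
      rw [← Set.ncard_image_of_injective _ Subtype.val_injective, ← Set.ncard_union_eq]
      · congr 1
        ext i
        by_cases hi : x i ∈ W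
        · simp [hi, (Submodule.Quotient.mk_eq_zero W).2 hi]
        · simp [hi]
      · exact Set.disjoint_left.2 fun i hi ⟨j, _, hj⟩ => j.2 (hj ▸ hi)
    have h := hW (U.comap W.mkQ)
    rw [hcard, finrank_comap_mkQ] at h
    push_cast at h
    linarith

end MaximalBasis

section IsotropicPosition

variable {𝕜 F κ ι : Type*} [RCLike 𝕜] [NormedAddCommGroup F]

lemma exists_norm_det_le [NormedSpace 𝕜 F] [FiniteDimensional 𝕜 F] [Fintype κ] [DecidableEq κ]
    (e : Basis κ 𝕜 F) : ∃ C : ℝ, 0 < C ∧ ∀ v : κ → F, ‖e.det v‖ ≤ C * ∏ j, ‖v j‖ := by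
  refine MultilinearMap.exists_bound_of_continuous e.det.toMultilinearMap ?_
  refine Continuous.matrix_det (continuous_matrix fun i j => ?_)
  exact (e.coord i).continuous_of_finiteDimensional.comp (continuous_apply j)

/-- The logarithmic loss of norm of the vector `v` under the map `A`. -/
noncomputable def logShrink (A : F → F) (v : F) : ℝ := Real.log ‖v‖ - Real.log ‖A v‖

-- By multiplicativity, `log ‖det A‖` is `log ‖e.det (A ∘ b)‖ - log ‖e.det b‖`, and only finitely
-- many bases `b` are taken from `S`.
lemma exists_log_norm_det_add_sum_logShrink_le [NormedSpace 𝕜 F] [Fintype κ] (e : Basis κ 𝕜 F)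
    {S : Set F} (hS : S.Finite) :
    ∃ C : ℝ, ∀ b : Basis κ 𝕜 F, (∀ j, b j ∈ S) → ∀ A : F ≃ₗ[𝕜] F,
      Real.log ‖LinearMap.det (A : F →ₗ[𝕜] F)‖ + ∑ j, logShrink A (b j) ≤ C := by
  classical
  have : FiniteDimensional 𝕜 F := .of_basis e
  obtain ⟨C₀, hC₀, hdet⟩ := exists_norm_det_le e
  let defect (v : κ → F) : ℝ := ∑ j, Real.log ‖v j‖ - Real.log ‖e.det v‖
  obtain ⟨C₁, hC₁⟩ := ((Set.Finite.pi' fun _ : κ => hS).image defect).bddAbove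
  refine ⟨Real.log C₀ + C₁, fun b hb A => ?_⟩
  have hA : ∀ j, ‖A (b j)‖ ≠ 0 := fun j =>
    norm_ne_zero_iff.2 (A.map_ne_zero_iff.2 (b.ne_zero j))
  have hdetA : ‖LinearMap.det (A : F →ₗ[𝕜] F)‖ ≠ 0 := norm_ne_zero_iff.2 A.isUnit_det'.ne_zero
  have hdetb : ‖e.det b‖ ≠ 0 := norm_ne_zero_iff.2 (e.isUnit_det b).ne_zero
  have hlog : Real.log ‖LinearMap.det (A : F →ₗ[𝕜] F)‖ + Real.log ‖e.det b‖ ≤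
      Real.log C₀ + ∑ j, Real.log ‖A (b j)‖ := by
    rw [← Real.log_mul hdetA hdetb, ← norm_mul, ← e.det_comp, ← Real.log_prod fun j _ => hA j,
      ← Real.log_mul hC₀.ne' (Finset.prod_ne_zero_iff.2 fun j _ => hA j)]
    refine Real.log_le_log (norm_pos_iff.2 ?_) (hdet _)
    rw [e.det_comp]
    exact mul_ne_zero (norm_ne_zero_iff.1 hdetA) (norm_ne_zero_iff.1 hdetb)
  have hdefect : ∑ j, Real.log ‖b j‖ - Real.log ‖e.det b‖ ≤ C₁ := hC₁ ⟨b, hb, rfl⟩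
  simp only [logShrink, Finset.sum_sub_distrib]
  linarith

/-- The functional whose near-maximisers over the linear contractions `A` bring the family `x`
into approximately isotropic position. -/
noncomputable def isotropyPotential [NormedSpace 𝕜 F] [Fintype ι] (x : ι → F) (s : ℝ)
    (A : F ≃ₗ[𝕜] F) : ℝ :=
  s * Real.log ‖LinearMap.det (A : F →ₗ[𝕜] F)‖ + ∑ i, logShrink A (x i)

lemma IsDispersed.exists_isotropyPotential_le [NormedSpace 𝕜 F] [FiniteDimensional 𝕜 F]
    [Fintype ι] {x : ι → F} {s : ℝ} (hx : IsDispersed 𝕜 x s) (hs : 0 ≤ s) :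
    ∃ C : ℝ, ∀ A : F ≃ₗ[𝕜] F, (∀ v, ‖A v‖ ≤ ‖v‖) → isotropyPotential x s A ≤ C := by
  let e := finBasis 𝕜 F
  let S : Set F := Set.range x ∪ Set.range e
  have hS : S.Finite := (Set.finite_range x).union (Set.finite_range e)
  obtain ⟨C, hC⟩ := exists_log_norm_det_add_sum_logShrink_le e hS
  refine ⟨s * C, fun A hA => ?_⟩
  have logShrink_nonneg : 0 ≤ logShrink A := fun v => by
    rcases eq_or_ne v 0 with rfl | hv
    · simp [logShrink]
    · exact sub_nonneg.2
        (Real.log_le_log (norm_pos_iff.2 (A.map_ne_zero_iff.2 hv)) (hA v))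
  obtain ⟨b, hbS, hb⟩ := exists_basis_forall_repr_ne_zero_imp_le hS e
    (fun j => .inr ⟨j, rfl⟩) (logShrink A)
  calc isotropyPotential x s A
      ≤ s * Real.log ‖LinearMap.det (A : F →ₗ[𝕜] F)‖ + s * ∑ j, logShrink A (b j) := by
        have h := hx.sum_le_mul_sum_basis hs logShrink_nonneg b
          fun i => hb (x i) (.inl ⟨i, rfl⟩)
        simpa only [isotropyPotential, add_le_add_iff_left] using h
    _ = s * (Real.log ‖LinearMap.det (A : F →ₗ[𝕜] F)‖ + ∑ j, logShrink A (b j)) := by ring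
    _ ≤ s * C := mul_le_mul_of_nonneg_left (hC b hbS A) hs

variable [InnerProductSpace 𝕜 F]

/-- The squared cosine of the angle between two vectors; it is `0` if one of them vanishes. -/
noncomputable def sqCos (𝕜 : Type*) {F : Type*} [RCLike 𝕜] [NormedAddCommGroup F]
    [InnerProductSpace 𝕜 F] (a b : F) : ℝ :=
  (‖inner 𝕜 a b‖ / (‖a‖ * ‖b‖)) ^ 2

lemma sqCos_nonneg (a b : F) : 0 ≤ sqCos 𝕜 a b := sq_nonneg _

lemma sqCos_comm (a b : F) : sqCos 𝕜 a b = sqCos 𝕜 b a := by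
  rw [sqCos, sqCos, norm_inner_symm, mul_comm]

lemma sqCos_zero_left (b : F) : sqCos 𝕜 0 b = 0 := by simp [sqCos]

lemma sqCos_smul_smul {α β : 𝕜} (hα : α ≠ 0) (hβ : β ≠ 0) (a b : F) :
    sqCos 𝕜 (α • a) (β • b) = sqCos 𝕜 a b := by
  have h : ‖α‖ * ‖β‖ ≠ 0 := mul_ne_zero (norm_ne_zero_iff.2 hα) (norm_ne_zero_iff.2 hβ)
  rw [sqCos, sqCos, inner_smul_left, inner_smul_right, norm_smul, norm_smul, norm_mul, norm_mul,
    RCLike.norm_conj, ← mul_assoc, mul_mul_mul_comm, mul_div_mul_left _ _ h]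

section HalveAlong

variable {y : F}

lemma neg_half_innerₛₗ_self (hy : ‖y‖ = 1) : (-(1 / 2 : 𝕜) • innerₛₗ 𝕜 y) y = -(1 / 2) := by
  simp [inner_self_eq_norm_sq_to_K, hy]

variable [FiniteDimensional 𝕜 F]

/-- The self-adjoint contraction that halves the unit vector `y` and fixes its orthogonal
complement. -/
noncomputable def halveAlong (𝕜 : Type*) [RCLike 𝕜] [InnerProductSpace 𝕜 F]
    [FiniteDimensional 𝕜 F] (hy : ‖y‖ = 1) : F ≃ₗ[𝕜] F :=
  LinearEquiv.dilatransvection (f := -(1 / 2 : 𝕜) • innerₛₗ 𝕜 y) (v := y) <| by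
    rw [neg_half_innerₛₗ_self hy]
    norm_num

lemma det_halveAlong (hy : ‖y‖ = 1) :
    LinearMap.det (halveAlong 𝕜 hy : F →ₗ[𝕜] F) = 1 / 2 := by
  rw [halveAlong, LinearEquiv.dilatransvection.coe_toLinearMap, LinearMap.transvection.det,
    neg_half_innerₛₗ_self hy]
  norm_num

lemma norm_halveAlong_sq (hy : ‖y‖ = 1) (v : F) :
    ‖halveAlong 𝕜 hy v‖ ^ 2 = ‖v‖ ^ 2 * (1 - 3 / 4 * sqCos 𝕜 y v) := by
  have apply_eq : halveAlong 𝕜 hy v = v - (1 / 2 * inner 𝕜 y v : 𝕜) • y := by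
    rw [halveAlong, LinearEquiv.dilatransvection.apply, LinearMap.smul_apply, innerₛₗ_apply_apply,
      neg_smul, neg_smul, sub_eq_add_neg, smul_eq_mul]
  have inner_eq : RCLike.re (inner 𝕜 v ((1 / 2 * inner 𝕜 y v : 𝕜) • y)) =
      1 / 2 * ‖inner 𝕜 y v‖ ^ 2 := by
    rw [inner_smul_right, mul_assoc, ← inner_conj_symm v y, RCLike.mul_conj]
    have h := RCLike.ofReal_re (K := 𝕜) (1 / 2 * ‖inner 𝕜 y v‖ ^ 2)
    push_cast at h
    exact h
  have norm_sq : ‖halveAlong 𝕜 hy v‖ ^ 2 = ‖v‖ ^ 2 - 3 / 4 * ‖inner 𝕜 y v‖ ^ 2 := by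
    rw [apply_eq, @norm_sub_sq 𝕜, inner_eq, norm_smul, norm_mul, hy, norm_div, norm_one,
      RCLike.norm_ofNat]
    ring
  rcases eq_or_ne v 0 with rfl | hv
  · simp
  have hv' : ‖v‖ ≠ 0 := norm_ne_zero_iff.2 hv
  rw [norm_sq, sqCos, hy]
  field_simp

lemma norm_halveAlong_le (hy : ‖y‖ = 1) (v : F) : ‖halveAlong 𝕜 hy v‖ ≤ ‖v‖ := by
  refine le_of_sq_le_sq ?_ (norm_nonneg v)
  rw [norm_halveAlong_sq]
  exact mul_le_of_le_one_right (sq_nonneg _) (by linarith [sqCos_nonneg (𝕜 := 𝕜) y v])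

lemma le_logShrink_halveAlong (hy : ‖y‖ = 1) {v : F} (hv : v ≠ 0) :
    3 / 8 * sqCos 𝕜 y v ≤ logShrink (halveAlong 𝕜 hy) v := by
  have hv' : 0 < ‖v‖ ^ 2 := by positivity
  have hBv : 0 < ‖halveAlong 𝕜 hy v‖ ^ 2 :=
    pow_pos (norm_pos_iff.2 ((halveAlong 𝕜 hy).map_ne_zero_iff.2 hv)) 2
  rw [norm_halveAlong_sq] at hBv
  have hlog := Real.log_le_sub_one_of_pos (pos_of_mul_pos_right hBv hv'.le)
  have hlogB := congrArg Real.log (norm_halveAlong_sq (𝕜 := 𝕜) hy v)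
  rw [Real.log_mul hv'.ne' (pos_of_mul_pos_right hBv hv'.le).ne', Real.log_pow, Real.log_pow]
    at hlogB
  push_cast at hlogB
  rw [logShrink]
  linarith

end HalveAlong

lemma isotropyPotential_trans_halveAlong_ge [FiniteDimensional 𝕜 F] [Fintype ι] {x : ι → F}
    (hx : ∀ i, x i ≠ 0) (s : ℝ) (A : F ≃ₗ[𝕜] F) {y : F} (hy : ‖y‖ = 1) :
    isotropyPotential x s A - s * Real.log 2 + 3 / 8 * ∑ i, sqCos 𝕜 y (A (x i)) ≤
      isotropyPotential x s (A.trans (halveAlong 𝕜 hy)) := by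
  have hdet : Real.log ‖LinearMap.det (A.trans (halveAlong 𝕜 hy) : F →ₗ[𝕜] F)‖ =
      Real.log ‖LinearMap.det (A : F →ₗ[𝕜] F)‖ - Real.log 2 := by
    rw [LinearEquiv.coe_trans, LinearMap.det_comp, det_halveAlong, norm_mul, one_div, norm_inv,
      RCLike.norm_ofNat, Real.log_mul (by norm_num) (norm_ne_zero_iff.2 A.isUnit_det'.ne_zero),
      Real.log_inv]
    ring
  have hshrink : ∑ i, logShrink A (x i) + 3 / 8 * ∑ i, sqCos 𝕜 y (A (x i)) ≤
      ∑ i, logShrink (A.trans (halveAlong 𝕜 hy)) (x i) := by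
    rw [Finset.mul_sum, ← Finset.sum_add_distrib]
    refine Finset.sum_le_sum fun i _ => ?_
    have h := le_logShrink_halveAlong (𝕜 := 𝕜) hy (A.map_ne_zero_iff.2 (hx i))
    simp only [logShrink, LinearEquiv.trans_apply] at h ⊢
    linarith
  rw [isotropyPotential, isotropyPotential, hdet]
  linarith

lemma IsDispersed.exists_linearEquiv_sum_sqCos_le [FiniteDimensional 𝕜 F] [Fintype ι]
    {x : ι → F} {s : ℝ} (hx : IsDispersed 𝕜 x s) (hs : 0 < s) :
    ∃ A : F ≃ₗ[𝕜] F, ∀ y, ∑ i, sqCos 𝕜 y (A (x i)) ≤ 4 * s := by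
  obtain ⟨C, hC⟩ := hx.exists_isotropyPotential_le hs.le
  let Φ := isotropyPotential x s '' {A : F ≃ₗ[𝕜] F | ∀ v, ‖A v‖ ≤ ‖v‖}
  have hbdd : BddAbove Φ := ⟨C, by rintro _ ⟨A, hA, rfl⟩; exact hC A hA⟩
  have hne : Φ.Nonempty := ⟨_, .refl 𝕜 F, fun v => le_rfl, rfl⟩
  obtain ⟨_, ⟨A, hA, rfl⟩, hmax⟩ := exists_lt_of_lt_csSup hne (sub_lt_self (sSup Φ) (half_pos hs))
  refine ⟨A, fun y => ?_⟩
  rcases eq_or_ne y 0 with rfl | hy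
  · simp only [sqCos_zero_left, Finset.sum_const_zero]
    positivity
  have hu : ‖((‖y‖⁻¹ : ℝ) : 𝕜) • y‖ = 1 := by
    exact_mod_cast norm_smul_inv_norm (𝕜 := 𝕜) hy
  have hle := le_csSup hbdd ⟨A.trans (halveAlong 𝕜 hu),
    fun v => (norm_halveAlong_le hu (A v)).trans (hA v), rfl⟩
  have hgain := isotropyPotential_trans_halveAlong_ge hx.ne_zero s A hu
  have sqCos_unit : ∀ v, sqCos 𝕜 (((‖y‖⁻¹ : ℝ) : 𝕜) • y) v = sqCos 𝕜 y v := fun v => by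
    simpa using sqCos_smul_smul (α := ((‖y‖⁻¹ : ℝ) : 𝕜)) (by simpa using hy) one_ne_zero y v
  simp only [sqCos_unit] at hgain
  have hlog : s * Real.log 2 ≤ s * 1 := by
    gcongr
    linarith [Real.log_two_lt_d9]
  linarith

lemma sqCos_zero_right (a : F) : sqCos 𝕜 a 0 = 0 := by simp [sqCos]

lemma norm_inner_le_sqrt_sqCos_mul (a b : F) (h : ‖b‖ ≤ ‖a‖) :
    ‖inner 𝕜 a b‖ ≤ √(sqCos 𝕜 a b) * ‖a‖ ^ 2 := by
  rcases eq_or_ne b 0 with rfl | hb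
  · simp [sqCos_zero_right]
  have hb' := norm_pos_iff.2 hb
  have ha' := hb'.trans_le h
  rw [sqCos, Real.sqrt_sq (by positivity), div_mul_eq_mul_div, le_div_iff₀ (by positivity), sq]
  gcongr

lemma half_le_sqCos_add_sqCos_of_norm_le {a b c : F} (h : a + b + c = 0) (ha : a ≠ 0)
    (hb : ‖b‖ ≤ ‖a‖) (hc : ‖c‖ ≤ ‖a‖) : 1 / 2 ≤ sqCos 𝕜 a b + sqCos 𝕜 a c := by
  have inner_self : inner 𝕜 a a = -(inner 𝕜 a b + inner 𝕜 a c) := by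
    rw [eq_neg_iff_add_eq_zero, ← inner_add_right, ← inner_add_right, ← add_assoc, h,
      inner_zero_right]
  have norm_sq_le : ‖a‖ ^ 2 ≤ ‖inner 𝕜 a b‖ + ‖inner 𝕜 a c‖ :=
    calc ‖a‖ ^ 2 = ‖inner 𝕜 a a‖ := by simp [inner_self_eq_norm_sq_to_K]
      _ ≤ ‖inner 𝕜 a b‖ + ‖inner 𝕜 a c‖ := by
        rw [inner_self, norm_neg]
        exact norm_add_le _ _
  have one_le : 1 ≤ √(sqCos 𝕜 a b) + √(sqCos 𝕜 a c) := by
    refine le_of_mul_le_mul_right ?_ (pow_pos (norm_pos_iff.2 ha) 2)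
    linarith [norm_inner_le_sqrt_sqCos_mul (𝕜 := 𝕜) a b hb,
      norm_inner_le_sqrt_sqCos_mul (𝕜 := 𝕜) a c hc]
  rw [← Real.sq_sqrt (sqCos_nonneg (𝕜 := 𝕜) a b), ← Real.sq_sqrt (sqCos_nonneg (𝕜 := 𝕜) a c)]
  nlinarith [sq_nonneg (√(sqCos 𝕜 a b) - √(sqCos 𝕜 a c))]

-- Some nonzero vector of the triple is longest; its correlations with the other two suffice.
lemma half_le_sqCos_add_sqCos_add_sqCos {a b c : F} (h : a + b + c = 0) (hab : a ≠ 0 ∨ b ≠ 0) :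
    1 / 2 ≤ sqCos 𝕜 a b + sqCos 𝕜 a c + sqCos 𝕜 b c := by
  wlog hb : ‖b‖ ≤ ‖a‖ generalizing a b
  · have := this (add_comm a b ▸ h) hab.symm (le_of_not_ge hb)
    rw [sqCos_comm b a] at this
    linarith
  have ha : a ≠ 0 := fun ha => hab.elim (absurd ha) fun hb' => hb' <| by simpa [ha] using hb
  rcases le_total ‖c‖ ‖a‖ with hc | hc
  · linarith [half_le_sqCos_add_sqCos_of_norm_le (𝕜 := 𝕜) h ha hb hc,
      sqCos_nonneg (𝕜 := 𝕜) b c]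
  · have hc' : c ≠ 0 := norm_pos_iff.1 ((norm_pos_iff.2 ha).trans_le hc)
    have hca : c + a + b = 0 := by rwa [add_assoc, add_comm]
    have := half_le_sqCos_add_sqCos_of_norm_le (𝕜 := 𝕜) hca hc' hc (hb.trans hc)
    rw [sqCos_comm c a, sqCos_comm c b] at this
    linarith [sqCos_nonneg (𝕜 := 𝕜) a b]

lemma half_le_sqCos_of_smul_add_smul_add_smul_eq_zero {α β γ : 𝕜} (hα : α ≠ 0) (hβ : β ≠ 0)
    (hγ : γ ≠ 0) {a b c : F} (h : α • a + β • b + γ • c = 0) (hab : a ≠ 0 ∨ b ≠ 0) :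
    1 / 2 ≤ sqCos 𝕜 a b + sqCos 𝕜 a c + sqCos 𝕜 b c := by
  have := half_le_sqCos_add_sqCos_add_sqCos (𝕜 := 𝕜) h
    (hab.imp (smul_ne_zero hα) (smul_ne_zero hβ))
  rwa [sqCos_smul_smul hα hβ, sqCos_smul_smul hα hγ, sqCos_smul_smul hβ hγ] at this

lemma exists_linearMap_sum_sqCos_le {M : Type*} [AddCommGroup M] [Module 𝕜 M]
    [FiniteDimensional 𝕜 M] [Fintype ι] (x : ι → M) {s : ℝ} (hs : 0 < s) :
    ∃ (n : ℕ) (T : M →ₗ[𝕜] EuclideanSpace 𝕜 (Fin n)),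
      s * finrank 𝕜 T.ker ≤ Fintype.card ι ∧ ∀ y, ∑ i, sqCos 𝕜 y (T (x i)) ≤ 4 * s := by
  classical
  obtain ⟨W, hW, hdisp⟩ := exists_submodule_isDispersed_mkQ (K := 𝕜) x s
  let φ : (M ⧸ W) ≃ₗ[𝕜] EuclideanSpace 𝕜 (Fin (finrank 𝕜 (M ⧸ W))) :=
    .ofFinrankEq _ _ finrank_euclideanSpace_fin.symm
  obtain ⟨A, hA⟩ := (hdisp.comp_linearEquiv φ).exists_linearEquiv_sum_sqCos_le hs
  let T := (φ.trans A).toLinearMap ∘ₗ W.mkQ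
  have ker_T : T.ker = W := by rw [LinearEquiv.ker_comp, W.ker_mkQ]
  refine ⟨_, T, by rwa [ker_T], fun y => ?_⟩
  rw [← Fintype.sum_subtype_add_sum_subtype (x · ∈ W),
    Fintype.sum_eq_zero _ fun i : {i // x i ∈ W} => ?_, zero_add]
  · exact hA y
  · rw [LinearMap.mem_ker.1 (ker_T.ge i.2), sqCos_zero_right]

end IsotropicPosition

section Triples

variable {ι : Type*}

/-- A ternary relation behaving like "`i`, `j`, `k` are distinct points of a common line": it is
symmetric, implies distinctness, and two points determine the line. -/
structure IsLineRel (T : ι → ι → ι → Prop) : Prop where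
  swap_left {i j k : ι} : T i j k → T j i k
  swap_right {i j k : ι} : T i j k → T i k j
  ne {i j k : ι} : T i j k → j ≠ k
  trans {i j k l : ι} : T i j k → T i j l → k ≠ l → T i k l

/-- The weight of `k` in the uniform distribution on the third points of the line through `i` and
`j`. -/
noncomputable def tripleWeight (T : ι → ι → ι → Prop) (i j : ι) : ι → ℝ :=
  {k | T i j k}.indicator fun _ => ({k | T i j k}.ncard : ℝ)⁻¹

variable {T : ι → ι → ι → Prop}

lemma tripleWeight_nonneg (i j k : ι) : 0 ≤ tripleWeight T i j k :=
  Set.indicator_nonneg (fun _ _ => by positivity) k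

lemma tripleWeight_of {i j k : ι} (h : T i j k) :
    tripleWeight T i j k = ({l | T i j l}.ncard : ℝ)⁻¹ :=
  Set.indicator_of_mem (s := {k | T i j k}) h _

lemma tripleWeight_of_not {i j k : ι} (h : ¬ T i j k) : tripleWeight T i j k = 0 :=
  Set.indicator_of_notMem h _

lemma IsLineRel.tripleWeight_swap_left (hT : IsLineRel T) (i j : ι) :
    tripleWeight T i j = tripleWeight T j i := by
  have : {k | T i j k} = {k | T j i k} := Set.ext fun _ => ⟨hT.swap_left, hT.swap_left⟩
  rw [tripleWeight, tripleWeight, this]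

lemma IsLineRel.ncard_setOf_eq (hT : IsLineRel T) {i j k : ι} (h : T i j k) :
    {l | T i j l}.ncard = {l | T i k l}.ncard := by
  have exchange : {l | T i k l} = insert j ({l | T i j l} \ {k}) := by
    ext l
    refine ⟨fun hl => or_iff_not_imp_left.2 fun hlj =>
      ⟨hT.trans (hT.swap_right h) hl (Ne.symm hlj), (hT.ne hl).symm⟩, ?_⟩
    rintro (rfl | ⟨hl, hlk⟩)
    · exact hT.swap_right h
    · exact hT.trans h hl (Ne.symm hlk)
  rw [exchange, Set.ncard_exchange (s := {l | T i j l}) (fun hj => hT.ne hj rfl) h]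

lemma IsLineRel.tripleWeight_swap_right (hT : IsLineRel T) (i j k : ι) :
    tripleWeight T i j k = tripleWeight T i k j := by
  by_cases h : T i j k
  · rw [tripleWeight_of h, tripleWeight_of (hT.swap_right h), hT.ncard_setOf_eq h]
  · rw [tripleWeight_of_not h, tripleWeight_of_not (mt hT.swap_right h)]

variable [Fintype ι]

lemma sum_tripleWeight (i j : ι) :
    ∑ k, tripleWeight T i j k = {k | T i j k}.ncard * ({k | T i j k}.ncard : ℝ)⁻¹ := by
  classical
  simp [tripleWeight, Set.indicator_apply, Finset.sum_ite, Set.ncard_eq_toFinset_card']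

lemma sum_tripleWeight_le_one (i j : ι) : ∑ k, tripleWeight T i j k ≤ 1 := by
  rw [sum_tripleWeight]
  exact mul_inv_le_one

lemma sum_tripleWeight_eq_one {i j k : ι} (h : T i j k) : ∑ l, tripleWeight T i j l = 1 := by
  rw [sum_tripleWeight]
  exact mul_inv_cancel₀ (Nat.cast_ne_zero.2 (Set.ncard_ne_zero_of_mem h))

lemma IsLineRel.sum_tripleWeight_mul_le (hT : IsLineRel T) {g : ι → ι → ℝ} (hg : ∀ i j, 0 ≤ g i j) :
    ∑ i, ∑ j, ∑ k, tripleWeight T i j k * (g i j + g i k + g j k) ≤ 3 * ∑ i, ∑ j, g i j := by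
  have sum_swap : ∑ i, ∑ j, ∑ k, tripleWeight T i j k * g i k =
      ∑ i, ∑ j, ∑ k, tripleWeight T i j k * g i j := by
    refine Finset.sum_congr rfl fun i _ => Finset.sum_comm.trans ?_
    simp only [hT.tripleWeight_swap_right i]
  have sum_rotate : ∑ i, ∑ j, ∑ k, tripleWeight T i j k * g j k =
      ∑ i, ∑ j, ∑ k, tripleWeight T i j k * g i j := by
    rw [Finset.sum_comm, ← sum_swap]
    refine Finset.sum_congr rfl fun j _ => Finset.sum_congr rfl fun i _ => ?_
    rw [hT.tripleWeight_swap_left]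
  have sum_le : ∑ i, ∑ j, ∑ k, tripleWeight T i j k * g i j ≤ ∑ i, ∑ j, g i j := by
    refine Finset.sum_le_sum fun i _ => Finset.sum_le_sum fun j _ => ?_
    rw [← Finset.sum_mul]
    exact mul_le_of_le_one_left (hg i j) (sum_tripleWeight_le_one i j)
  simp only [mul_add, Finset.sum_add_distrib]
  linarith

-- Average the inequality over the third points of each line; by symmetry of the weights every pair
-- is then charged at most three times.
lemma IsLineRel.ncard_le_six_mul_sum (hT : IsLineRel T) {g : ι → ι → ℝ} (hg : ∀ i j, 0 ≤ g i j)
    {Q : Set (ι × ι)} (hQ : ∀ q ∈ Q, ∃ k, T q.1 q.2 k)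
    (h : ∀ q ∈ Q, ∀ k, T q.1 q.2 k → 1 / 2 ≤ g q.1 q.2 + g q.1 k + g q.2 k) :
    (Q.ncard : ℝ) ≤ 6 * ∑ i, ∑ j, g i j := by
  classical
  let total (q : ι × ι) := ∑ k, tripleWeight T q.1 q.2 k * (g q.1 q.2 + g q.1 k + g q.2 k)
  have half_le (q : ι × ι) (hq : q ∈ Q) : 1 / 2 ≤ total q := by
    obtain ⟨k, hk⟩ := hQ q hq
    calc (1 / 2 : ℝ) = ∑ l, tripleWeight T q.1 q.2 l * (1 / 2) := by
          rw [← Finset.sum_mul, sum_tripleWeight_eq_one hk, one_mul]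
      _ ≤ total q := Finset.sum_le_sum fun l _ => by
          by_cases hl : T q.1 q.2 l
          · exact mul_le_mul_of_nonneg_left (h q hq l hl) (tripleWeight_nonneg _ _ _)
          · simp only [tripleWeight_of_not hl, zero_mul, le_refl]
  have sum_le : ∑ q ∈ Q.toFinset, total q ≤ 3 * ∑ i, ∑ j, g i j :=
    calc ∑ q ∈ Q.toFinset, total q ≤ ∑ q, total q :=
          Finset.sum_le_univ_sum_of_nonneg fun q => Finset.sum_nonneg fun k _ =>
            mul_nonneg (tripleWeight_nonneg _ _ _)
              (add_nonneg (add_nonneg (hg _ _) (hg _ _)) (hg _ _))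
      _ ≤ 3 * ∑ i, ∑ j, g i j := by
          rw [Fintype.sum_prod_type]
          exact hT.sum_tripleWeight_mul_le hg
  have card_le := Finset.card_nsmul_le_sum Q.toFinset total (1 / 2)
    fun q hq => half_le q (Set.mem_toFinset.1 hq)
  rw [nsmul_eq_mul, ← Set.ncard_eq_toFinset_card'] at card_le
  linarith

end Triples

section AffinePoints

variable {K E P ι : Type*} [Field K] [AddCommGroup E] [Module K E] [AddTorsor E P]

/-- The points `p`, `q`, `r` are pairwise distinct and lie on a common line. -/
def IsCollinearTriple (K : Type*) {E P : Type*} [Field K] [AddCommGroup E] [Module K E]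
    [AddTorsor E P] (p q r : P) : Prop :=
  p ≠ q ∧ p ≠ r ∧ q ≠ r ∧ Collinear K {p, q, r}

lemma isCollinearTriple_of_mem_affineSpan {p q r : P} (hpq : p ≠ q) (hrp : r ≠ p) (hrq : r ≠ q)
    (hr : r ∈ affineSpan K {p, q}) : IsCollinearTriple K p q r := by
  refine ⟨hpq, hrp.symm, hrq.symm, ?_⟩
  rw [Set.pair_comm q r, Set.insert_comm]
  exact collinear_insert_of_mem_affineSpan_pair hr

lemma IsCollinearTriple.mem_affineSpan {p q r : P} (h : IsCollinearTriple K p q r) :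
    r ∈ affineSpan K {p, q} :=
  h.2.2.2.mem_affineSpan_of_mem_of_ne (by simp) (by simp) (by simp) h.1

lemma isLineRel_isCollinearTriple {p : ι → P} (hp : Function.Injective p) :
    IsLineRel fun i j k => IsCollinearTriple K (p i) (p j) (p k) where
  swap_left h := ⟨h.1.symm, h.2.2.1, h.2.1, Set.insert_comm _ _ _ ▸ h.2.2.2⟩
  swap_right h := ⟨h.2.1, h.1, h.2.2.1.symm, Set.pair_comm (p _) _ ▸ h.2.2.2⟩
  ne h := ne_of_apply_ne p h.2.2.1
  trans {i j k l} h h' hkl := by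
    refine ⟨h.2.1, h'.2.1, hp.ne hkl, ?_⟩
    exact collinear_triple_of_mem_affineSpan_pair (left_mem_affineSpan_pair K _ _)
      h.mem_affineSpan h'.mem_affineSpan

/-- Homogeneous coordinates of the points of the family `p`, with origin `p i₀`. Affine
dependences of points become linear dependences. -/
def homogenize (K : Type*) {E P ι : Type*} [Field K] [AddCommGroup E] [Module K E]
    [AddTorsor E P] (p : ι → P) (i₀ i : ι) : vectorSpan K (Set.range p) × K :=
  (⟨p i -ᵥ p i₀, vsub_mem_vectorSpan K ⟨i, rfl⟩ ⟨i₀, rfl⟩⟩, 1)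

lemma IsCollinearTriple.exists_smul_homogenize_add_eq_zero {p : ι → P} (i₀ : ι) {i j k : ι}
    (h : IsCollinearTriple K (p i) (p j) (p k)) :
    ∃ α β γ : K, α ≠ 0 ∧ β ≠ 0 ∧ γ ≠ 0 ∧
      α • homogenize K p i₀ i + β • homogenize K p i₀ j + γ • homogenize K p i₀ k = 0 := by
  obtain ⟨t, ht⟩ :=
    mem_affineSpan_pair_iff_exists_lineMap_eq.1 h.mem_affineSpan
  refine ⟨1 - t, t, -1, ?_, ?_, by simp, ?_⟩
  · rintro ht1
    rw [← sub_eq_zero.1 ht1, AffineMap.lineMap_apply_one] at ht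
    exact h.2.2.1 ht
  · rintro rfl
    rw [AffineMap.lineMap_apply_zero] at ht
    exact h.2.1 ht
  · refine Prod.ext (Subtype.ext ?_) (by simp [homogenize])
    have hk : p k -ᵥ p i₀ = (1 - t) • (p i -ᵥ p i₀) + t • (p j -ᵥ p i₀) := by
      rw [← ht, AffineMap.lineMap_apply, vadd_vsub_assoc,
        ← vsub_sub_vsub_cancel_right (p j) (p i) (p i₀)]
      module
    simp [homogenize, hk]

lemma finrank_vectorSpan_image_le_finrank [Finite ι] (p : ι → P) (i₀ : ι)
    (U : Submodule K (vectorSpan K (Set.range p) × K)) :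
    finrank K (vectorSpan K (p '' {i | homogenize K p i₀ i ∈ U})) ≤ finrank K U := by
  have : FiniteDimensional K (vectorSpan K (Set.range p)) :=
    finiteDimensional_vectorSpan_of_finite K (Set.finite_range p)
  let π := (vectorSpan K (Set.range p)).subtype ∘ₗ LinearMap.fst K _ K
  have hle : vectorSpan K (p '' {i | homogenize K p i₀ i ∈ U}) ≤ U.map π := by
    rw [vectorSpan_def, Submodule.span_le]
    rintro _ ⟨_, ⟨i, hi, rfl⟩, _, ⟨j, hj, rfl⟩, rfl⟩
    exact ⟨_, U.sub_mem hi hj, by simp [π, homogenize]⟩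
  exact (Submodule.finrank_mono hle).trans (Submodule.finrank_map_le π U)

end AffinePoints

section SpecialPairs

variable {𝕜 E P : Type*} [RCLike 𝕜] [AddCommGroup E] [Module 𝕜 E] [AddTorsor E P]

lemma exists_finrank_vectorSpan_le_and_ncard_le {ι : Type*} [Fintype ι] {p : ι → P}
    (hp : Function.Injective p) {s : ℝ} (hs : 0 < s) :
    ∃ J : Set ι, s * finrank 𝕜 (vectorSpan 𝕜 (p '' J)) ≤ Fintype.card ι ∧
      ({q : ι × ι | ¬(q.1 ∈ J ∧ q.2 ∈ J) ∧
        ∃ k, IsCollinearTriple 𝕜 (p q.1) (p q.2) (p k)}.ncard : ℝ) ≤ 24 * s * Fintype.card ι := by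
  rcases isEmpty_or_nonempty ι with _ | ⟨⟨i₀⟩⟩
  · exact ⟨∅, by rw [Set.image_empty, vectorSpan_empty, finrank_bot]; simp, by simp⟩
  have : FiniteDimensional 𝕜 (vectorSpan 𝕜 (Set.range p)) :=
    finiteDimensional_vectorSpan_of_finite 𝕜 (Set.finite_range p)
  obtain ⟨n, T, hker, hT⟩ := exists_linearMap_sum_sqCos_le (𝕜 := 𝕜) (homogenize 𝕜 p i₀) hs
  let z i := T (homogenize 𝕜 p i₀ i)
  refine ⟨{i | homogenize 𝕜 p i₀ i ∈ T.ker}, ?_, ?_⟩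
  · refine le_trans ?_ hker
    gcongr
    exact finrank_vectorSpan_image_le_finrank p i₀ T.ker
  · have half_le : ∀ i j, ¬(z i = 0 ∧ z j = 0) → ∀ k, IsCollinearTriple 𝕜 (p i) (p j) (p k) →
        1 / 2 ≤ sqCos 𝕜 (z i) (z j) + sqCos 𝕜 (z i) (z k) + sqCos 𝕜 (z j) (z k) := by
      intro i j hij k hk
      obtain ⟨α, β, γ, hα, hβ, hγ, hsum⟩ := hk.exists_smul_homogenize_add_eq_zero i₀
      refine half_le_sqCos_of_smul_add_smul_add_smul_eq_zero hα hβ hγ ?_ (not_and_or.1 hij)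
      simpa only [map_add, map_smul, map_zero] using congrArg T hsum
    refine ((isLineRel_isCollinearTriple hp).ncard_le_six_mul_sum
      (fun i j => sqCos_nonneg (z i) (z j)) (fun q hq => hq.2)
      fun q hq => half_le q.1 q.2 hq.1).trans ?_
    calc 6 * ∑ i, ∑ j, sqCos 𝕜 (z i) (z j) ≤ 6 * ∑ _i : ι, 4 * s :=
          mul_le_mul_of_nonneg_left (Finset.sum_le_sum fun i _ => hT (z i)) (by norm_num)
      _ = 24 * s * Fintype.card ι := by
          rw [Finset.sum_const, Finset.card_univ, nsmul_eq_mul]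
          ring

lemma exists_finset_finrank_vectorSpan_le_and_ncard_le (V : Finset P) {s : ℝ} (hs : 0 < s) :
    ∃ V' : Finset P, s * finrank 𝕜 (vectorSpan 𝕜 (V' : Set P)) ≤ V.card ∧
      ∀ Q : Set (P × P), (∀ q ∈ Q, q.1 ∈ V ∧ q.2 ∈ V ∧ ¬(q.1 ∈ V' ∧ q.2 ∈ V') ∧
        ∃ r ∈ V, IsCollinearTriple 𝕜 q.1 q.2 r) → (Q.ncard : ℝ) ≤ 24 * s * V.card := by
  classical
  obtain ⟨J, hJ, hcard⟩ := exists_finrank_vectorSpan_le_and_ncard_le (𝕜 := 𝕜)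
    (p := ((↑) : V → P)) Subtype.val_injective hs
  rw [Fintype.card_coe] at hJ hcard
  refine ⟨J.toFinset.map (.subtype (· ∈ V)), ?_, fun Q hQ => ?_⟩
  · rw [Finset.coe_map, Set.coe_toFinset]
    exact hJ
  · refine le_trans (Nat.cast_le.2 ?_) hcard
    rw [← Set.ncard_image_of_injective _ (Subtype.val_injective.prodMap Subtype.val_injective)]
    refine Set.ncard_le_ncard fun q hq => ?_
    obtain ⟨h₁, h₂, hJq, r, hr, h⟩ := hQ q hq
    refine ⟨(⟨q.1, h₁⟩, ⟨q.2, h₂⟩), ⟨fun hJ => hJq ?_, ⟨r, hr⟩, h⟩, rfl⟩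
    simpa [h₁, h₂] using hJ

lemma ncard_le_card_inter_mul_card_add_ncard {α : Type*} [DecidableEq α] {V ℬ : Finset α}
    {Q : Set (α × α)} (hQ : ∀ q ∈ Q, q.1 ∈ ℬ ∧ q.2 ∈ V) (V' : Finset α) :
    Q.ncard ≤ (ℬ ∩ V').card * V.card + {q ∈ Q | ¬(q.1 ∈ V' ∧ q.2 ∈ V')}.ncard := by
  have hfin : Q.Finite := (ℬ ×ˢ V).finite_toSet.subset fun q hq => Finset.mem_product.2 (hQ q hq)
  have hsub : {q ∈ Q | q.1 ∈ V' ∧ q.2 ∈ V'} ⊆ ((ℬ ∩ V') ×ˢ V : Finset (α × α)) :=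
    fun q hq => Finset.mem_product.2
      ⟨Finset.mem_inter.2 ⟨(hQ q hq.1).1, hq.2.1⟩, (hQ q hq.1).2⟩
  rw [← Set.ncard_inter_add_ncard_sdiff_eq_ncard Q {q | q.1 ∈ V' ∧ q.2 ∈ V'} hfin,
    ← Finset.card_product, ← Set.ncard_coe_finset]
  exact Nat.add_le_add_right (Set.ncard_le_ncard hsub (Finset.finite_toSet _)) _

theorem stmt_15_general {δ c : ℝ} (hδ : 0 < δ) (hc : c < 1) {V ℬ : Finset P} (hℬ : ℬ ⊆ V)
    {Q : Set (P × P)} (hcard : δ * (V.card : ℝ) ^ 2 ≤ Q.ncard)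
    (hQ : ∀ q ∈ Q, q.1 ∈ ℬ ∧ q.2 ∈ V ∧ ∃ r ∈ V, IsCollinearTriple 𝕜 q.1 q.2 r) :
    ∃ ℬ' ⊆ ℬ, c * δ * V.card ≤ ℬ'.card ∧
      (finrank 𝕜 (affineSpan 𝕜 (ℬ' : Set P)).direction : ℝ) ≤ 24 / ((1 - c) * δ) := by
  classical
  have : 0 < 1 - c := sub_pos.2 hc
  rcases V.eq_empty_or_nonempty with rfl | hV
  · refine ⟨∅, Finset.empty_subset _, by simp, ?_⟩
    rw [direction_affineSpan, Finset.coe_empty, vectorSpan_empty, finrank_bot, Nat.cast_zero]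
    positivity
  have hV' : (0 : ℝ) < V.card := Nat.cast_pos.2 hV.card_pos
  obtain ⟨V', hdim, hbad⟩ := exists_finset_finrank_vectorSpan_le_and_ncard_le (𝕜 := 𝕜) V
    (s := (1 - c) * δ * V.card / 24) (by positivity)
  refine ⟨ℬ ∩ V', Finset.inter_subset_left, ?_, ?_⟩
  · have hQbad := hbad {q ∈ Q | ¬(q.1 ∈ V' ∧ q.2 ∈ V')} fun q ⟨hq, hqV'⟩ =>
      ⟨hℬ (hQ q hq).1, (hQ q hq).2.1, hqV', (hQ q hq).2.2⟩
    have hsplit : (Q.ncard : ℝ) ≤ (ℬ ∩ V').card * V.card +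
        {q ∈ Q | ¬(q.1 ∈ V' ∧ q.2 ∈ V')}.ncard := by
      exact_mod_cast ncard_le_card_inter_mul_card_add_ncard
        (fun q hq => ⟨(hQ q hq).1, (hQ q hq).2.1⟩) V'
    refine le_of_mul_le_mul_right ?_ hV'
    linarith
  · have finrank_le : finrank 𝕜 (vectorSpan 𝕜 ((ℬ ∩ V' : Finset P) : Set P)) ≤
        finrank 𝕜 (vectorSpan 𝕜 (V' : Set P)) := by
      have := finiteDimensional_vectorSpan_of_finite 𝕜 V'.finite_toSet
      exact Submodule.finrank_mono (vectorSpan_mono 𝕜 (by simp))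
    rw [direction_affineSpan, le_div_iff₀ (by positivity)]
    calc (finrank 𝕜 (vectorSpan 𝕜 ((ℬ ∩ V' : Finset P) : Set P)) : ℝ) * ((1 - c) * δ)
        ≤ finrank 𝕜 (vectorSpan 𝕜 (V' : Set P)) * ((1 - c) * δ) := by gcongr
      _ ≤ 24 := le_of_mul_le_mul_right (by linarith) hV'

end SpecialPairs

/-- there is a universal constant `C` such that: if `V ⊂ ℂ^d` is a set of
`n` points and `ℬ ⊆ V` is such that at least `δ n²` pairs in `ℬ × (V \ ℬ)` lie on a
special line (a line containing a third point of `V`), then some `ℬ' ⊆ ℬ` with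
`|ℬ'| ≥ (δ/6) n` has affine dimension at most `C / δ`. -/
theorem stmt_15 :
    ∃ C : ℝ, 0 < C ∧ ∀ (d : ℕ) (δ : ℝ), 0 < δ → δ ≤ 1 →
      ∀ (V ℬ : Finset (Fin d → ℂ)), ℬ ⊆ V →
      δ * (V.card : ℝ) ^ 2 ≤
        ({p : (Fin d → ℂ) × (Fin d → ℂ) |
            p.1 ∈ ℬ ∧ p.2 ∈ V ∧ p.2 ∉ ℬ ∧ p.1 ≠ p.2 ∧
            ∃ w ∈ V, w ≠ p.1 ∧ w ≠ p.2 ∧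
              w ∈ affineSpan ℂ ({p.1, p.2} : Set (Fin d → ℂ))}.ncard : ℝ) →
      ∃ ℬ' ⊆ ℬ, (δ / 6) * (V.card : ℝ) ≤ (ℬ'.card : ℝ) ∧
        (Module.finrank ℂ
          ↥(affineSpan ℂ ((ℬ' : Set (Fin d → ℂ)))).direction : ℝ) ≤ C * (1 / δ) := by
  refine ⟨144 / 5, by norm_num, fun d δ hδ _ V ℬ hℬ hcard => ?_⟩
  obtain ⟨ℬ', hℬ', hcard', hdim⟩ := stmt_15_general hδ (c := 1 / 6) (by norm_num) hℬ hcard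
    fun q ⟨hq₁, hq₂, _, hne, r, hr, hr₁, hr₂, hmem⟩ =>
      ⟨hq₁, hq₂, r, hr, isCollinearTriple_of_mem_affineSpan hne hr₁ hr₂ hmem⟩
  exact ⟨ℬ', hℬ', by linarith, hdim.trans_eq (by field_simp; norm_num)⟩
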